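/- Let w ∈ SU(2) ∗ F₂ be a word whose content ε(w) equals the commutator [x₁,x₂] = x₁x₂x₁⁻¹x₂⁻¹ of the two generators of F₂. Then there exist a, b ∈ SU(2) such that the evaluation homomorphism SU(2) ∗ F₂ → SU(2) (identity on SU(2), x₁ ↦ a, x₂ ↦ b) sends w to the identity; i.e., the equation w(a,b) = 1 can be solved in SU(2). -/

import Mathlib

/-- The special unitary group `SU(n)`: the subgroup of the unitary group
`U(n) = Matrix.unitaryGroup (Fin n) ℂ` consisting of matrices of determinant `1`. -/
def SU (n : ℕ) : Subgroup (Matrix.unitaryGroup (Fin n) ℂ) where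
  carrier := {A | (A : Matrix (Fin n) (Fin n) ℂ).det = 1}
  mul_mem' := by
    intro a b ha hb
    simp only [Set.mem_setOf_eq] at *
    simp [Matrix.UnitaryGroup.mul_val, Matrix.det_mul, ha, hb]
  one_mem' := by simp
  inv_mem' := by
    intro a ha
    simp only [Set.mem_setOf_eq] at *
    show ((a⁻¹ : Matrix.unitaryGroup (Fin n) ℂ) : Matrix (Fin n) (Fin n) ℂ).det = 1
    rw [Matrix.UnitaryGroup.inv_val, Matrix.star_eq_conjTranspose, Matrix.det_conjTranspose, ha]
    simp

/-!
Identify `SU(2)` with the unit quaternions and suppose that `w(a, b) ≠ 1` for all `a` and `b`.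
Contracting the constants of `w` to `1` along paths gives a homotopy from `ab` to `w(a, b) · ba`.
Since `w(a, b) · ba` is never `ba`, a straight-line homotopy leads on to `-ba`. All these maps into
`ℍ` are without zeros and odd in both `a` and `b`.

For imaginary `a` and `b`, however, `-ba` is `ab` with its real part negated. Restricting to
`a ∈ S²` and `b ∈ S¹` and gluing the ends of the homotopy by this reflection therefore yields a
section without zeros of a vector bundle of rank `4` over `ℝP² × ℝP¹ × S¹`. With `x`, `y`, `z` the
generators of the mod `2` cohomology of the factors, its top Stiefel–Whitney class is
`(x + y)³ (x + y + z) = x² y z ≠ 0`, a contradiction.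

The class is evaluated combinatorially, in the manner of Tucker's lemma: label the vertices of a
fine grid by the signs of the four components and pull back ordered mod `2` cochains along the
labelling. A cell on which the product cochain is nonzero shows both signs of each component,
whereas on a small cell some component has constant sign.
-/

/-! ### Ordered cochains modulo `2` -/

/-- Ordered cochains modulo `2` of all degrees on the vertex set `V`: a list of `n + 1` vertices is
an ordered `n`-simplex, and the empty list carries the augmentation. -/
abbrev OrderedCochain (V : Type*) := List V → ZMod 2

namespace OrderedCochain

variable {U V W : Type*}

/-- The pullback of ordered cochains along a map of vertices. -/
def pullback (f : U → V) : OrderedCochain V →ₗ[ZMod 2] OrderedCochain U :=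
  LinearMap.funLeft (ZMod 2) (ZMod 2) (List.map f)

@[simp] theorem pullback_apply (f : U → V) (ω : OrderedCochain V) (l : List U) :
    pullback f ω l = ω (l.map f) := rfl

theorem pullback_pullback (f : U → V) (h : V → W) (ω : OrderedCochain W) :
    pullback f (pullback h ω) = pullback (h ∘ f) ω := by
  ext l; simp

/-- Contraction by the vertex `v`: evaluation on the cones with apex `v`. -/
def link (v : V) : OrderedCochain V →ₗ[ZMod 2] OrderedCochain V :=
  LinearMap.funLeft (ZMod 2) (ZMod 2) (List.cons v)

@[simp] theorem link_apply (v : V) (ω : OrderedCochain V) (l : List V) :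
    link v ω l = ω (v :: l) := rfl

/-- Evaluation of a cochain on the boundary of a simplex, that is, on the sum of the lists obtained
by deleting one entry. -/
def boundaryEval : List V → OrderedCochain V →ₗ[ZMod 2] ZMod 2
  | [] => 0
  | v :: l => LinearMap.proj l + boundaryEval l ∘ₗ link v

/-- The coboundary of ordered cochains. -/
def coboundary : OrderedCochain V →ₗ[ZMod 2] OrderedCochain V :=
  LinearMap.pi boundaryEval

@[simp] theorem coboundary_nil (ω : OrderedCochain V) : coboundary ω [] = 0 := rfl

@[simp] theorem coboundary_cons (ω : OrderedCochain V) (v : V) (l : List V) :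
    coboundary ω (v :: l) = ω l + coboundary (link v ω) l := rfl

theorem link_coboundary (ω : OrderedCochain V) (v : V) :
    link v (coboundary ω) = ω + coboundary (link v ω) := rfl

theorem coboundary_coboundary (ω : OrderedCochain V) : coboundary (coboundary ω) = 0 := by
  ext l
  induction l generalizing ω with
  | nil => rfl
  | cons v l ih => simp [link_coboundary, ih, CharTwo.add_self_eq_zero]

theorem pullback_coboundary (f : U → V) (ω : OrderedCochain V) :
    pullback f (coboundary ω) = coboundary (pullback f ω) := by
  ext l
  induction l generalizing ω with
  | nil => rfl
  | cons u l ih => exact congrArg (ω (l.map f) + ·) (ih (link (f u) ω))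

/-- Evaluation of a cochain on the triangulated prism over a simplex, with bottom face mapped
by `φ` and top face by `ψ`. -/
def prismEval (φ ψ : U → V) : List U → OrderedCochain V →ₗ[ZMod 2] ZMod 2
  | [] => 0
  | u :: l => LinearMap.proj (φ u :: ψ u :: l.map ψ) + prismEval φ ψ l ∘ₗ link (φ u)

/-- The prism operator of a pair of vertex maps, a cochain homotopy between their pullbacks. -/
def prismStep (φ ψ : U → V) : OrderedCochain V →ₗ[ZMod 2] OrderedCochain U :=
  LinearMap.pi (prismEval φ ψ)

@[simp] theorem prismStep_nil (φ ψ : U → V) (ω : OrderedCochain V) : prismStep φ ψ ω [] = 0 := rfl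

@[simp] theorem prismStep_cons (φ ψ : U → V) (ω : OrderedCochain V) (u : U) (l : List U) :
    prismStep φ ψ ω (u :: l) =
      ω (φ u :: ψ u :: l.map ψ) + prismStep φ ψ (link (φ u) ω) l := rfl

theorem link_prismStep (φ ψ : U → V) (ω : OrderedCochain V) (u : U) :
    link u (prismStep φ ψ ω) =
      pullback ψ (link (ψ u) (link (φ u) ω)) + prismStep φ ψ (link (φ u) ω) := rfl

theorem prismStep_coboundary (φ ψ : U → V) (ω : OrderedCochain V) :
    prismStep φ ψ (coboundary ω) =
      coboundary (prismStep φ ψ ω) + pullback φ ω + pullback ψ ω := by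
  ext l
  induction l generalizing ω with
  | nil => simp [CharTwo.add_self_eq_zero]
  | cons u l ih =>
    simp only [prismStep_cons, Pi.add_apply, coboundary_cons, link_coboundary, link_prismStep,
      map_add, ih, pullback_apply, List.map_cons, link_apply, ← pullback_coboundary]
    linear_combination CharTwo.add_self_eq_zero (ω (φ u :: l.map ψ))

theorem pullback_prismStep {U' V' : Type*} {f : U → U'} {h : V → V'} {φ ψ : U → V}
    {φ' ψ' : U' → V'} (hφ : ∀ u, φ' (f u) = h (φ u)) (hψ : ∀ u, ψ' (f u) = h (ψ u))
    (ω : OrderedCochain V') :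
    pullback f (prismStep φ' ψ' ω) = prismStep φ ψ (pullback h ω) := by
  ext l
  induction l generalizing ω with
  | nil => rfl
  | cons u l ih =>
    have comp : ψ' ∘ f = h ∘ ψ := funext hψ
    have tail := ih (link (h (φ u)) ω)
    simp only [pullback_apply, List.map_cons, prismStep_cons, List.map_map, comp, hφ, hψ] at tail ⊢
    rw [tail]
    rfl

theorem exists_of_prismStep_ne_zero {φ ψ : U → V} {ω : OrderedCochain V} {l : List U}
    (h : prismStep φ ψ ω l ≠ 0) : ∃ m, ω m ≠ 0 ∧ ∀ v ∈ m, ∃ u ∈ l, v = φ u ∨ v = ψ u := by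
  induction l generalizing ω with
  | nil => exact absurd rfl h
  | cons u l ih =>
    by_cases h₀ : ω (φ u :: ψ u :: l.map ψ) = 0
    · rw [prismStep_cons, h₀, zero_add] at h
      obtain ⟨m, hm, hml⟩ := ih h
      exact ⟨φ u :: m, hm, by grind⟩
    · exact ⟨_, h₀, by grind⟩

/-- The prism operator of a sequence of vertex maps: the sum of the `prismStep`s between
consecutive ones among `φ 0, …, φ N`. -/
def prism (φ : ℕ → U → V) (N : ℕ) : OrderedCochain V →ₗ[ZMod 2] OrderedCochain U :=
  ∑ j ∈ Finset.range N, prismStep (φ j) (φ (j + 1))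

theorem prism_succ (φ : ℕ → U → V) (N : ℕ) (ω : OrderedCochain V) :
    prism φ (N + 1) ω = prism φ N ω + prismStep (φ N) (φ (N + 1)) ω := by
  simp [prism, Finset.sum_range_succ]

@[simp] theorem prism_nil (φ : ℕ → U → V) (N : ℕ) (ω : OrderedCochain V) :
    prism φ N ω [] = 0 := by
  simp [prism]

theorem prism_coboundary (φ : ℕ → U → V) (N : ℕ) (ω : OrderedCochain V) :
    prism φ N (coboundary ω) =
      coboundary (prism φ N ω) + pullback (φ 0) ω + pullback (φ N) ω := by
  induction N with
  | zero => simp [prism, CharTwo.add_self_eq_zero]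
  | succ N ih =>
    have cancel := CharTwo.add_self_eq_zero (pullback (φ N) ω)
    rw [prism_succ, prism_succ, ih, prismStep_coboundary, map_add]
    linear_combination cancel

theorem pullback_prism {U' V' : Type*} {f : U → U'} {h : V → V'} {φ : ℕ → U → V}
    {φ' : ℕ → U' → V'} (hφ : ∀ j u, φ' j (f u) = h (φ j u)) (N : ℕ) (ω : OrderedCochain V') :
    pullback f (prism φ' N ω) = prism φ N (pullback h ω) := by
  simp only [prism, LinearMap.sum_apply, map_sum]
  exact Finset.sum_congr rfl fun j _ => pullback_prismStep (hφ j) (hφ (j + 1)) ω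

theorem exists_of_prism_ne_zero {φ : ℕ → U → V} {N : ℕ} {ω : OrderedCochain V} {l : List U}
    (h : prism φ N ω l ≠ 0) :
    ∃ j < N, ∃ m, ω m ≠ 0 ∧ ∀ v ∈ m, ∃ u ∈ l, ∃ j' ∈ Set.Icc j (j + 1), v = φ j' u := by
  simp only [prism, LinearMap.sum_apply, Finset.sum_apply] at h
  obtain ⟨j, hj, hne⟩ := Finset.exists_ne_zero_of_sum_ne_zero h
  obtain ⟨m, hm, hml⟩ := exists_of_prismStep_ne_zero hne
  refine ⟨j, Finset.mem_range.1 hj, m, hm, fun v hv => ?_⟩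
  obtain ⟨u, hu, rfl | rfl⟩ := hml v hv
  exacts [⟨u, hu, j, by simp, rfl⟩, ⟨u, hu, j + 1, by simp, rfl⟩]

/-- Evaluation of a cochain on the edge path `γ 0, …, γ N`. -/
def pathEval (γ : ℕ → V) (N : ℕ) : OrderedCochain V →ₗ[ZMod 2] ZMod 2 :=
  ∑ i ∈ Finset.range N, LinearMap.proj [γ i, γ (i + 1)]

theorem pathEval_apply (γ : ℕ → V) (N : ℕ) (ω : OrderedCochain V) :
    pathEval γ N ω = ∑ i ∈ Finset.range N, ω [γ i, γ (i + 1)] := by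
  simp [pathEval]

theorem pathEval_coboundary (γ : ℕ → V) (N : ℕ) (ω : OrderedCochain V) :
    pathEval γ N (coboundary ω) = ω [γ 0] + ω [γ N] := by
  rw [pathEval_apply]
  induction N with
  | zero => simp [CharTwo.add_self_eq_zero]
  | succ N ih =>
    rw [Finset.sum_range_succ, ih]
    simp only [coboundary_cons, coboundary_nil, link_apply]
    linear_combination CharTwo.add_self_eq_zero (ω [γ N])

theorem pathEval_pullback (f : U → V) (γ : ℕ → U) (N : ℕ) (ω : OrderedCochain V) :
    pathEval γ N (pullback f ω) = pathEval (f ∘ γ) N ω := by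
  simp [pathEval_apply]

theorem pathEval_add (γ : ℕ → V) (N M : ℕ) (ω : OrderedCochain V) :
    pathEval γ (N + M) ω = pathEval γ N ω + pathEval (fun i => γ (N + i)) M ω := by
  simp [pathEval_apply, Finset.sum_range_add, add_assoc]

theorem pathEval_const (v : V) (N : ℕ) (ω : OrderedCochain V) :
    pathEval (fun _ => v) N ω = N * ω [v, v] := by
  simp [pathEval_apply]

/-- The unit `0`-cocycle. -/
def unit : OrderedCochain V
  | [_] => 1
  | _ => 0

/-- The cup product `s ∪ ω` with a `0`-cochain `s`. -/
def scale (s : V → ZMod 2) (ω : OrderedCochain V) : OrderedCochain V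
  | [] => 0
  | v :: l => s v * ω (v :: l)

/-- The cup product `δs ∪ ω` with the coboundary of a `0`-cochain `s`. -/
def cup (s : V → ZMod 2) (ω : OrderedCochain V) : OrderedCochain V
  | v :: w :: l => (s v + s w) * ω (w :: l)
  | _ => 0

theorem coboundary_unit : coboundary (unit : OrderedCochain V) = 0 := by
  have link_link (u v : V) : link v (link u unit) = 0 := rfl
  ext l
  match l with
  | [] => rfl
  | [_] => rfl
  | [_, _] => exact CharTwo.add_self_eq_zero 1
  | u :: v :: w :: l => simp [link_link, unit]

theorem coboundary_scale {s : V → ZMod 2} {ω : OrderedCochain V} (hω : coboundary ω = 0) :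
    coboundary (scale s ω) = cup s ω := by
  have link_scale (v : V) : link v (scale s ω) = s v • link v ω := rfl
  have coboundary_link (v : V) : coboundary (link v ω) = ω := by
    rw [← CharTwo.add_eq_zero, add_comm, ← link_coboundary, hω, map_zero]
  ext l
  match l with
  | [] => rfl
  | [_] => simp [link_scale, cup, scale]
  | v :: w :: l =>
    rw [coboundary_cons, link_scale, map_smul, coboundary_link, cup, add_mul, add_comm]
    rfl

theorem coboundary_cup {s : V → ZMod 2} {ω : OrderedCochain V} (hω : coboundary ω = 0) :
    coboundary (cup s ω) = 0 := by
  rw [← coboundary_scale hω, coboundary_coboundary]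

theorem exists_of_foldr_cup_ne_zero {ι : Type*} {s : ι → V → ZMod 2} {ms : List ι} {l : List V}
    (h : ms.foldr (fun m => cup (s m)) unit l ≠ 0) {m : ι} (hm : m ∈ ms) (c : ZMod 2) :
    ∃ v ∈ l, s m v = c := by
  induction ms generalizing l with
  | nil => simp at hm
  | cons m' ms ih =>
    match l with
    | [] => exact absurd rfl h
    | [_] => exact absurd rfl h
    | v :: w :: l =>
      obtain ⟨hvw, hl⟩ := mul_ne_zero_iff.1 h
      obtain rfl | hm := List.mem_cons.1 hm
      · have two_values : ∀ x y c : ZMod 2, x + y ≠ 0 → x = c ∨ y = c := by decide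
        obtain hv | hw := two_values _ _ c hvw
        exacts [⟨v, by simp, hv⟩, ⟨w, by simp, hw⟩]
      · obtain ⟨x, hx, hxc⟩ := ih hl hm
        exact ⟨x, List.mem_cons_of_mem _ hx, hxc⟩

section TranslationInvariant

variable [AddGroup V]

/-- Cocycles invariant under translations, and vanishing on the empty simplex: these come from
the quotient of the contractible simplex on `V` by `V`, so they represent classes in the cohomology
of the group `V`. -/
structure IsInvariantCocycle (ω : OrderedCochain V) : Prop where
  apply_nil : ω [] = 0
  coboundary_eq_zero : coboundary ω = 0
  pullback_add_right (g : V) : pullback (· + g) ω = ω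

theorem isInvariantCocycle_unit : IsInvariantCocycle (unit : OrderedCochain V) where
  apply_nil := rfl
  coboundary_eq_zero := coboundary_unit
  pullback_add_right g := by
    ext l
    match l with
    | [] => rfl
    | [_] => rfl
    | _ :: _ :: _ => rfl

variable {ω : OrderedCochain V} (hω : IsInvariantCocycle ω) (s : V →+ ZMod 2)
include hω

theorem IsInvariantCocycle.cup : IsInvariantCocycle (cup s ω) where
  apply_nil := rfl
  coboundary_eq_zero := coboundary_cup hω.coboundary_eq_zero
  pullback_add_right g := by
    ext l
    match l with
    | [] => rfl
    | [_] => rfl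
    | v :: w :: l =>
      have hl := congrFun (hω.pullback_add_right g) (w :: l)
      simp only [pullback_apply, List.map_cons] at hl
      simp only [pullback_apply, List.map_cons, OrderedCochain.cup, map_add, hl]
      linear_combination ω (w :: l) * CharTwo.add_self_eq_zero (s g)

theorem IsInvariantCocycle.pullback_scale (g : V) :
    pullback (· + g) (scale s ω) = scale s ω + s g • ω := by
  ext l
  match l with
  | [] => simp [scale, hω.apply_nil]
  | v :: l =>
    have hl := congrFun (hω.pullback_add_right g) (v :: l)
    simp only [pullback_apply, List.map_cons] at hl
    simp [scale, hl, add_mul]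

theorem IsInvariantCocycle.prism_cup {lab : ℕ → U → V} {N : ℕ} {h : V}
    (hlab : ∀ u, lab N u = lab 0 u + h) :
    prism lab N (OrderedCochain.cup s ω) =
      coboundary (prism lab N (scale s ω)) + s h • pullback (lab 0) ω := by
  have top : pullback (lab N) (scale s ω) =
      pullback (lab 0) (scale s ω) + s h • pullback (lab 0) ω := by
    rw [← map_smul, ← map_add, ← hω.pullback_scale, pullback_pullback, funext hlab]
    rfl
  rw [← coboundary_scale hω.coboundary_eq_zero, prism_coboundary, top]
  linear_combination CharTwo.add_self_eq_zero (pullback (lab 0) (scale s ω))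

theorem IsInvariantCocycle.pullback_prism_scale {lab : ℕ → U → V} {f : U → U} {g : V}
    (hlab : ∀ t u, lab t (f u) = lab t u + g) (N : ℕ) :
    pullback f (prism lab N (scale s ω)) =
      prism lab N (scale s ω) + s g • prism lab N ω := by
  rw [pullback_prism (h := (· + g)) hlab, hω.pullback_scale, map_add, map_smul]

end TranslationInvariant

/-! ### Cochains on a twisted product of a sphere, a circle and an interval -/

/-- A labelling of half of a sphere by latitude circles: `A i j` is the `i`-th of `2N` points on
the `j`-th circle; the `0`-th circle is the equator, whose two halves are exchanged
by the antipode `n`, and the `N`-th circle is degenerate. -/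
structure IsHemisphereGrid {S : Type*} (n : S → S) (N : ℕ) (A : ℕ → ℕ → S) : Prop where
  equator (i : ℕ) : A (N + i) 0 = n (A i 0)
  periodic (j : ℕ) : A (N + N) j = A 0 j
  pole (i : ℕ) : A i N = A 0 N

section Hemisphere

variable {S : Type*} {n : S → S} {N : ℕ} {A : ℕ → ℕ → S}

/-- Evaluation of a cochain on the half of the equator of a hemisphere grid. -/
def equatorEval (A : ℕ → ℕ → S) (N : ℕ) : OrderedCochain S →ₗ[ZMod 2] ZMod 2 :=
  pathEval (A · 0) N

/-- Evaluation of a cochain on the surface triangulated by a hemisphere grid. -/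
def hemisphereEval (A : ℕ → ℕ → S) (N : ℕ) : OrderedCochain S →ₗ[ZMod 2] ZMod 2 :=
  pathEval id (N + N) ∘ₗ prism (fun j i => A i j) N

theorem equatorEval_coboundary (hA : IsHemisphereGrid n N A) (ξ : OrderedCochain S) :
    equatorEval A N (coboundary ξ) = (ξ + pullback n ξ) [A 0 0] := by
  rw [equatorEval, pathEval_coboundary, ← Nat.add_zero N, hA.equator]
  rfl

theorem hemisphereEval_coboundary (hA : IsHemisphereGrid n N A) (ξ : OrderedCochain S) :
    hemisphereEval A N (coboundary ξ) = equatorEval A N (ξ + pullback n ξ) := by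
  have seam : prism (fun j i => A i j) N ξ [N + N] = prism (fun j i => A i j) N ξ [0] := by
    simp [prism, hA.periodic]
  have pole : pathEval (fun i => A i N) (N + N) ξ = 0 := by
    rw [funext hA.pole, pathEval_const, Nat.cast_add, CharTwo.add_self_eq_zero, zero_mul]
  have equator : pathEval (A · 0) (N + N) ξ = equatorEval A N (ξ + pullback n ξ) := by
    rw [pathEval_add, map_add, equatorEval, pathEval_pullback]
    simp only [hA.equator]
    rfl
  rw [hemisphereEval, LinearMap.comp_apply, prism_coboundary, map_add, map_add,
    pathEval_coboundary, pathEval_pullback, pathEval_pullback, ← equator, id, id, seam,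
    CharTwo.add_self_eq_zero, zero_add]
  exact (congrArg _ pole).trans (add_zero _)

end Hemisphere

section Product

variable {S S' : Type*} {nS : S → S} {nS' : S' → S'} {N : ℕ} {A : ℕ → ℕ → S} {b : ℕ → S'}

/-- The slant product with the edge path `b 0, …, b N`. -/
def slantPath (b : ℕ → S') (N : ℕ) : OrderedCochain (S × S') →ₗ[ZMod 2] OrderedCochain S :=
  prism (fun k a => (a, b k)) N

/-- The slant product with the vertex `b 0`. -/
def slantPoint (b : ℕ → S') : OrderedCochain (S × S') →ₗ[ZMod 2] OrderedCochain S :=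
  pullback (·, b 0)

theorem slantPath_coboundary (hb : b N = nS' (b 0)) (ξ : OrderedCochain (S × S')) :
    slantPath b N (coboundary ξ) =
      coboundary (slantPath b N ξ) + slantPoint b (ξ + pullback (Prod.map id nS') ξ) := by
  rw [slantPath, prism_coboundary, add_assoc, hb, slantPoint, map_add, pullback_pullback]
  rfl

theorem pullback_slantPath (ξ : OrderedCochain (S × S')) :
    pullback nS (slantPath b N ξ) = slantPath b N (pullback (Prod.map nS id) ξ) :=
  pullback_prism (f := nS) (h := Prod.map nS id) (fun _ _ => rfl) N ξ

end Product

section Labelling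

variable {S S' : Type*} [Neg S] [Neg S'] {N : ℕ}

/-- A vertex labelling of `S × S' × {0, …, N}` by `Fin 4 → ZMod 2` that is odd in `S` and in `S'`,
and for which the label at the end `N` differs from the one at the end `0` exactly in the
coordinate `0`. -/
structure IsTwistedLabelling (N : ℕ) (lab : ℕ → S × S' → Fin 4 → ZMod 2) : Prop where
  neg_left (t : ℕ) (p : S × S') : lab t (Prod.map Neg.neg id p) = lab t p + 1
  neg_right (t : ℕ) (p : S × S') : lab t (Prod.map id Neg.neg p) = lab t p + 1
  twist (p : S × S') : lab N p = lab 0 p + Pi.single 0 1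

/-- The homomorphism reading off the `m`-th coordinate of a label. -/
abbrev coord (m : Fin 4) : (Fin 4 → ZMod 2) →+ ZMod 2 := Pi.evalAddMonoidHom _ m

/-- The product of the four coordinate classes, representing the mod `2` Euler class of a sum of
four real line bundles. It is the coordinate `0` that feels the twist of a labelling; putting it
last keeps the twist out of all steps of the evaluation except the final one. -/
def eulerCocycle : OrderedCochain (Fin 4 → ZMod 2) :=
  [1, 2, 3, 0].foldr (fun m : Fin 4 => cup (coord m)) unit

variable {lab : ℕ → S × S' → Fin 4 → ZMod 2} (hlab : IsTwistedLabelling N lab)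
  {ω : OrderedCochain (Fin 4 → ZMod 2)}
include hlab

theorem IsTwistedLabelling.exists_coboundary_eq_prism_cup (hω : IsInvariantCocycle ω) {m : Fin 4}
    (hm : m ≠ 0) :
    ∃ ξ, prism lab N (cup (coord m) ω) = coboundary ξ ∧
      ξ + pullback (Prod.map Neg.neg id) ξ = prism lab N ω ∧
      ξ + pullback (Prod.map id Neg.neg) ξ = prism lab N ω := by
  have cancel (ξ η : OrderedCochain (S × S')) : ξ + (ξ + η) = η := by
    rw [← add_assoc, CharTwo.add_self_eq_zero, zero_add]
  refine ⟨prism lab N (scale (coord m) ω), ?_, ?_, ?_⟩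
  · simp [hω.prism_cup (coord m) hlab.twist, hm]
  · simp [hω.pullback_prism_scale (coord m) hlab.neg_left, cancel]
  · simp [hω.pullback_prism_scale (coord m) hlab.neg_right, cancel]

theorem IsTwistedLabelling.prism_cup_unit_apply (p : S × S') :
    prism lab N (cup (coord 0) unit) [p] = 1 := by
  simp [isInvariantCocycle_unit.prism_cup (coord 0) hlab.twist, unit]

variable {A : ℕ → ℕ → S} {b : ℕ → S'} (hA : IsHemisphereGrid Neg.neg N A) (hb : b N = -b 0)
  (hω : IsInvariantCocycle ω) {m : Fin 4} (hm : m ≠ 0)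

section Chain

variable {e e' : OrderedCochain S →ₗ[ZMod 2] ZMod 2}
  (he : ∀ ξ, e (coboundary ξ) = e' (ξ + pullback Neg.neg ξ))
include he hω hm

theorem IsTwistedLabelling.slantPoint_prism_cup :
    e (slantPoint b (prism lab N (cup (coord m) ω))) = e' (slantPoint b (prism lab N ω)) := by
  obtain ⟨ξ, hξ, hS, -⟩ := hlab.exists_coboundary_eq_prism_cup hω hm
  rw [hξ, slantPoint, pullback_coboundary, he, ← hS, map_add (pullback _), pullback_pullback,
    pullback_pullback]
  rfl

include hb in
theorem IsTwistedLabelling.slantPath_prism_cup :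
    e (slantPath b N (prism lab N (cup (coord m) ω))) =
      e' (slantPath b N (prism lab N ω)) + e (slantPoint b (prism lab N ω)) := by
  obtain ⟨ξ, hξ, hS, hS'⟩ := hlab.exists_coboundary_eq_prism_cup hω hm
  rw [hξ, slantPath_coboundary hb, hS', map_add, he, pullback_slantPath, ← map_add, hS]

end Chain

include hb hω hm in
theorem IsTwistedLabelling.slantPath_prism_cup_apply (a : S) :
    slantPath b N (prism lab N (cup (coord m) ω)) [a] = prism lab N ω [(a, b 0)] := by
  obtain ⟨ξ, hξ, -, hS'⟩ := hlab.exists_coboundary_eq_prism_cup hω hm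
  rw [hξ, slantPath_coboundary hb, hS']
  simp [slantPath, slantPoint]

include hA hb in
theorem IsTwistedLabelling.hemisphereEval_slantPath_prism_eulerCocycle :
    hemisphereEval A N (slantPath b N (prism lab N eulerCocycle)) = 1 := by
  let w (ms : List (Fin 4)) : OrderedCochain (Fin 4 → ZMod 2) :=
    ms.foldr (fun m => cup (coord m)) unit
  have hw₀ : IsInvariantCocycle (w [0]) := isInvariantCocycle_unit.cup _
  have hw₃ : IsInvariantCocycle (w [3, 0]) := hw₀.cup _
  have hw₂ : IsInvariantCocycle (w [2, 3, 0]) := hw₃.cup _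
  calc hemisphereEval A N (slantPath b N (prism lab N (w [1, 2, 3, 0])))
    _ = equatorEval A N (slantPath b N (prism lab N (w [2, 3, 0]))) +
          hemisphereEval A N (slantPoint b (prism lab N (w [2, 3, 0]))) :=
        hlab.slantPath_prism_cup hb hw₂ (by decide) (hemisphereEval_coboundary hA)
    _ = slantPath b N (prism lab N (w [3, 0])) [A 0 0] +
          equatorEval A N (slantPoint b (prism lab N (w [3, 0]))) +
          equatorEval A N (slantPoint b (prism lab N (w [3, 0]))) := by
        congr 1
        · exact hlab.slantPath_prism_cup (e' := LinearMap.proj [A 0 0]) hb hw₃ (by decide)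
            (equatorEval_coboundary hA)
        · exact hlab.slantPoint_prism_cup hw₃ (by decide) (hemisphereEval_coboundary hA)
    _ = slantPath b N (prism lab N (w [3, 0])) [A 0 0] := by
        rw [add_assoc, CharTwo.add_self_eq_zero, add_zero]
    _ = prism lab N (w [0]) [(A 0 0, b 0)] := hlab.slantPath_prism_cup_apply hb hw₀ (by decide) _
    _ = 1 := hlab.prism_cup_unit_apply _

include hA hb in
theorem IsTwistedLabelling.exists_cell :
    ∃ x : Fin 4 → ℕ, (∀ i, x i ≤ 2 * N) ∧ ∀ (m : Fin 4) (c : ZMod 2),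
      ∃ y ∈ Set.Icc x (x + 1), lab (y 3) (A (y 0) (y 1), b (y 2)) m = c := by
  have hne : hemisphereEval A N (slantPath b N (prism lab N eulerCocycle)) ≠ 0 := by
    simp [hlab.hemisphereEval_slantPath_prism_eulerCocycle hA hb]
  rw [hemisphereEval, LinearMap.comp_apply, pathEval_apply] at hne
  obtain ⟨i, hi, hne⟩ := Finset.exists_ne_zero_of_sum_ne_zero hne
  obtain ⟨j, hj, lS, hne, hlS⟩ := exists_of_prism_ne_zero hne
  obtain ⟨k, hk, lSS', hne, hlSS'⟩ := exists_of_prism_ne_zero hne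
  obtain ⟨t, ht, l, hne, hl⟩ := exists_of_prism_ne_zero hne
  refine ⟨![i, j, k, t], ?_, fun m c => ?_⟩
  · have hi := Finset.mem_range.1 hi
    intro n
    fin_cases n <;> simp <;> omega
  obtain ⟨v, hv, hvc⟩ := exists_of_foldr_cup_ne_zero hne (m := m) (by fin_cases m <;> simp) c
  obtain ⟨p, hp, t', ht', rfl⟩ := hl v hv
  obtain ⟨a, ha, k', hk', rfl⟩ := hlSS' p hp
  obtain ⟨i', hi', j', hj', rfl⟩ := hlS a ha
  have hi' : i' ∈ Set.Icc i (i + 1) := by grind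
  refine ⟨![i', j', k', t'], ⟨fun n => ?_, fun n => ?_⟩, hvc⟩
  · fin_cases n
    exacts [hi'.1, hj'.1, hk'.1, ht'.1]
  · fin_cases n
    exacts [hi'.2, hj'.2, hk'.2, ht'.2]

end Labelling

end OrderedCochain

/-! ### Labellings by signs -/

section SignLabelling

/-- The parity `1` for positive and `0` for negative `x`, and the tie-break `c` for `x = 0`. -/
noncomputable def signParity (x : ℝ) (c : ZMod 2) : ZMod 2 :=
  if 0 < x then 1 else if x < 0 then 0 else c

theorem signParity_of_pos {x : ℝ} (hx : 0 < x) (c : ZMod 2) : signParity x c = 1 :=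
  if_pos hx

theorem signParity_of_neg {x : ℝ} (hx : x < 0) (c : ZMod 2) : signParity x c = 0 := by
  rw [signParity, if_neg hx.not_gt, if_pos hx]

theorem signParity_neg (x : ℝ) (c : ZMod 2) : signParity (-x) (c + 1) = signParity x c + 1 := by
  obtain hx | rfl | hx := lt_trichotomy x 0
  · rw [signParity_of_pos (neg_pos.2 hx), signParity_of_neg hx, zero_add]
  · simp [signParity]
  · rw [signParity_of_neg (neg_lt_zero.2 hx), signParity_of_pos hx, CharTwo.add_self_eq_zero]

theorem exists_parity_neg_eq_add_one {X : Type*} [InvolutiveNeg X] (hX : ∀ x : X, -x ≠ x) :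
    ∃ τ : X → ZMod 2, ∀ x, τ (-x) = τ x + 1 := by
  classical
  let r : X → X → Prop := WellOrderingRel
  refine ⟨fun x => if r x (-x) then 0 else 1, fun x => ?_⟩
  have asymm : r x (-x) → ¬ r (-x) x := asymm_of r
  have total : r x (-x) ∨ r (-x) x := by
    simpa [(hX x).symm] using trichotomous_of r x (-x)
  by_cases h : r x (-x)
  · simp [h, asymm h]
  · simp [h, total.resolve_left h, CharTwo.add_self_eq_zero]

theorem exists_pos_forall_ball_sign {X ι : Type*} [PseudoMetricSpace X] {K : Set X}
    (hK : IsCompact K) {h : X → ι → ℝ} (hcont : Continuous h) (hne : ∀ x ∈ K, h x ≠ 0) :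
    ∃ δ > 0, ∀ x ∈ K, ∃ m,
      (∀ y ∈ Metric.ball x δ, 0 < h y m) ∨ ∀ y ∈ Metric.ball x δ, h y m < 0 := by
  let U (p : ι × Bool) : Set X := if p.2 then {y | 0 < h y p.1} else {y | h y p.1 < 0}
  have isOpen_U (p : ι × Bool) : IsOpen (U p) := by
    have coord_cont : Continuous fun y => h y p.1 := (continuous_apply p.1).comp hcont
    obtain ⟨m, _ | _⟩ := p
    exacts [isOpen_lt coord_cont continuous_const, isOpen_lt continuous_const coord_cont]
  have cover : K ⊆ ⋃ p, U p := fun x hx => by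
    obtain ⟨m, hm⟩ := Function.ne_iff.1 (hne x hx)
    obtain hm | hm := lt_or_gt_of_ne hm
    exacts [Set.mem_iUnion.2 ⟨(m, false), hm⟩, Set.mem_iUnion.2 ⟨(m, true), hm⟩]
  obtain ⟨δ, hδ, hball⟩ := lebesgue_number_lemma_of_metric hK isOpen_U cover
  refine ⟨δ, hδ, fun x hx => ?_⟩
  obtain ⟨⟨m, _ | _⟩, hm⟩ := hball x hx
  exacts [⟨m, .inr hm⟩, ⟨m, .inl hm⟩]

theorem exists_grid_forall_cell_sign {κ ι : Type*} [Finite κ] {h : (κ → ℝ) → ι → ℝ}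
    (hcont : Continuous h) (hne : ∀ x, h x ≠ 0) (R : ℕ) :
    ∃ N : ℕ, N ≠ 0 ∧ ∀ x : κ → ℕ, (∀ i, x i ≤ R * N) → ∃ m,
      (∀ y ∈ Set.Icc x (x + 1), 0 < h (fun i => y i / N) m) ∨
        ∀ y ∈ Set.Icc x (x + 1), h (fun i => y i / N) m < 0 := by
  cases nonempty_fintype κ
  obtain ⟨δ, hδ, sign_const⟩ := exists_pos_forall_ball_sign
    (isCompact_Icc : IsCompact (Set.Icc (0 : κ → ℝ) fun _ => R)) hcont fun x _ => hne x
  obtain ⟨n, hn⟩ := exists_nat_one_div_lt hδ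
  obtain ⟨N, hN, hNδ⟩ : ∃ N : ℕ, 0 < N ∧ 1 / (N : ℝ) < δ := ⟨n + 1, by simp, by exact_mod_cast hn⟩
  refine ⟨N, hN.ne', fun x hx => ?_⟩
  have mem_box : (fun i => x i / N : κ → ℝ) ∈ Set.Icc (0 : κ → ℝ) fun _ => R :=
    ⟨fun i => by positivity, fun i => show (x i / N : ℝ) ≤ R from
      div_le_of_le_mul₀ (by positivity) (by positivity) (by exact_mod_cast hx i)⟩
  have mem_ball {y : κ → ℕ} (hy : y ∈ Set.Icc x (x + 1)) :
      (fun i => y i / N : κ → ℝ) ∈ Metric.ball (fun i => x i / N : κ → ℝ) δ := by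
    refine (dist_pi_lt_iff hδ).2 fun i => lt_of_le_of_lt ?_ hNδ
    have lower : (x i : ℝ) ≤ y i := by exact_mod_cast hy.1 i
    have upper : (y i : ℝ) ≤ x i + 1 := by exact_mod_cast hy.2 i
    rw [Real.dist_eq, ← sub_div, abs_of_nonneg (div_nonneg (sub_nonneg.2 lower) N.cast_nonneg)]
    gcongr
    linarith
  obtain ⟨m, hm⟩ := sign_const _ mem_box
  exact ⟨m, hm.imp (fun h _ hy => h _ (mem_ball hy)) fun h _ hy => h _ (mem_ball hy)⟩

end SignLabelling

section Sphere

open Real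

/-- The point of the unit sphere in `ℝ³` at longitude `π x` and latitude `π y / 2`. -/
noncomputable def latLong : C(ℝ × ℝ, Metric.sphere (0 : EuclideanSpace ℝ (Fin 3)) 1) where
  toFun p := ⟨!₂[cos (π / 2 * p.2) * cos (π * p.1), cos (π / 2 * p.2) * sin (π * p.1),
      sin (π / 2 * p.2)], by
    simp only [mem_sphere_zero_iff_norm, EuclideanSpace.norm_eq, Real.sqrt_eq_one,
      Fin.sum_univ_three, Real.norm_eq_abs, sq_abs, Matrix.cons_val]
    linear_combination cos (π / 2 * p.2) ^ 2 * sin_sq_add_cos_sq (π * p.1) +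
      sin_sq_add_cos_sq (π / 2 * p.2)⟩
  continuous_toFun := by
    refine Continuous.subtype_mk ((PiLp.continuous_toLp 2 _).comp (continuous_pi fun m => ?_)) _
    fin_cases m <;> simp only [Fin.zero_eta, Fin.mk_one, Fin.reduceFinMk, Matrix.cons_val] <;>
      fun_prop

theorem isHemisphereGrid_latLong {N : ℕ} (hN : N ≠ 0) :
    OrderedCochain.IsHemisphereGrid Neg.neg N fun i j => latLong (i / N, j / N) where
  equator i := by
    ext m
    fin_cases m <;> simp [latLong, add_div, mul_add, hN, add_comm π]
  periodic j := by
    ext m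
    fin_cases m <;> simp [latLong, hN, ← two_mul, mul_comm π 2]
  pole i := by
    ext m
    fin_cases m <;> simp [latLong, hN]

theorem exists_isTwistedLabelling {X X' : Type*} [InvolutiveNeg X] [InvolutiveNeg X']
    (hX : ∀ x : X, -x ≠ x) (hX' : ∀ x : X', -x ≠ x) {N : ℕ} (hN : N ≠ 0)
    {h : ℕ → X × X' → Fin 4 → ℝ} (neg_left : ∀ t p, h t (Prod.map Neg.neg id p) = -h t p)
    (neg_right : ∀ t p, h t (Prod.map id Neg.neg p) = -h t p)
    (twist : ∀ p, h N p = Function.update (h 0 p) 0 (-h 0 p 0)) :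
    ∃ lab, OrderedCochain.IsTwistedLabelling N lab ∧
      ∀ t p m, (0 < h t p m → lab t p m = 1) ∧ (h t p m < 0 → lab t p m = 0) := by
  obtain ⟨τ, hτ⟩ := exists_parity_neg_eq_add_one hX
  obtain ⟨τ', hτ'⟩ := exists_parity_neg_eq_add_one hX'
  let tie (t : ℕ) (p : X × X') : Fin 4 → ZMod 2 :=
    (fun _ => τ p.1 + τ' p.2) + if t = N then Pi.single 0 1 else 0
  refine ⟨fun t p m => signParity (h t p m) (tie t p m),
    ⟨fun t p => ?_, fun t p => ?_, fun p => ?_⟩,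
    fun t p m => ⟨fun hp => signParity_of_pos hp _, fun hn => signParity_of_neg hn _⟩⟩
  · have tie_neg : tie t (Prod.map Neg.neg id p) = tie t p + 1 := by
      ext m
      simp only [tie, Pi.add_apply, Prod.map_fst, Prod.map_snd, id, hτ, Pi.one_apply]
      ring
    ext m
    simp [neg_left, tie_neg, signParity_neg]
  · have tie_neg : tie t (Prod.map id Neg.neg p) = tie t p + 1 := by
      ext m
      simp only [tie, Pi.add_apply, Prod.map_fst, Prod.map_snd, id, hτ', Pi.one_apply]
      ring
    ext m
    simp [neg_right, tie_neg, signParity_neg]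
  · have tie_twist : tie N p = tie 0 p + Pi.single 0 1 := by
      ext m
      simp [tie, hN.symm]
    ext m
    obtain rfl | hm := eq_or_ne m 0
    · simp [twist, tie_twist, signParity_neg]
    · simp [twist, tie_twist, hm]

/-- A map without zeros would be a nowhere vanishing section of a vector bundle of rank `4`
over `ℝP² × ℝP¹ × S¹`, whose top Stiefel–Whitney class `(x + y)³ (x + y + z)` is not zero. -/
theorem exists_eq_zero_of_odd_of_reflect
    (H : C(unitInterval × Metric.sphere (0 : EuclideanSpace ℝ (Fin 3)) 1 × Circle, Fin 4 → ℝ))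
    (neg_left : ∀ t a b, H (t, -a, b) = -H (t, a, b))
    (neg_right : ∀ t a b, H (t, a, -b) = -H (t, a, b))
    (reflect : ∀ p, H (1, p) = Function.update (H (0, p)) 0 (-H (0, p) 0)) :
    ∃ p, H p = 0 := by
  by_contra! hne
  let h (x : Fin 4 → ℝ) : Fin 4 → ℝ :=
    H (Set.projIcc 0 1 zero_le_one (x 3), latLong (x 0, x 1), Circle.exp (π * x 2))
  have h_cont : Continuous h := H.continuous.comp (by fun_prop)
  obtain ⟨N, hN, sign_const⟩ := exists_grid_forall_cell_sign h_cont (fun x => hne _) 2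
  have circle_neg_ne (z : Circle) : -z ≠ z := fun hz =>
    z.coe_ne_zero (neg_eq_self.1 (congrArg ((↑) : Circle → ℂ) hz))
  obtain ⟨lab, hlab, lab_eq⟩ := exists_isTwistedLabelling
    (fun x => (ne_neg_of_mem_unit_sphere ℝ x).symm) circle_neg_ne hN
    (h := fun t p => H (Set.projIcc 0 1 zero_le_one (t / N), p))
    (fun _ _ => neg_left _ _ _) (fun _ _ => neg_right _ _ _)
    (fun p => by simpa [hN] using reflect p)
  have half_turn : Circle.exp (π * (N / N : ℝ)) =
      -Circle.exp (π * ((0 : ℕ) / N : ℝ)) := by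
    ext; simp [hN]
  obtain ⟨x, hx, all_labels⟩ := hlab.exists_cell (isHemisphereGrid_latLong hN)
    (b := fun k => Circle.exp (π * (k / N))) half_turn
  obtain ⟨m, pos | neg⟩ := sign_const x hx
  · obtain ⟨y, hy, lab_zero⟩ := all_labels m 0
    exact one_ne_zero (((lab_eq _ _ _).1 (pos y hy)).symm.trans lab_zero)
  · obtain ⟨y, hy, lab_one⟩ := all_labels m 1
    exact zero_ne_one (((lab_eq _ _ _).2 (neg y hy)).symm.trans lab_one)

end Sphere

/-! ### Homotopy of a word to its content -/

section ContentHomotopy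

theorem neg_one_mem_center {R : Type*} [Group R] [HasDistribNeg R] :
    (-1 : R) ∈ Subgroup.center R :=
  Subgroup.mem_center_iff.2 fun a => by rw [mul_neg_one, neg_one_mul]

open Monoid (Coprod)

variable {G ι Q : Type*} [Group G] [Group Q] [TopologicalSpace Q] {κ : G →* Q}

/-- A homotopy from the evaluations of the content of `w` to the evaluations of `w`, along which
central factors of the variables come out as they do for the content. -/
structure IsContentHomotopy (κ : G →* Q) (w : Coprod G (FreeGroup ι))
    (W : C(unitInterval × (ι → Q), Q)) : Prop where
  zero_left (x : ι → Q) : W (0, x) = FreeGroup.lift x (Coprod.snd w)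
  one_left (x : ι → Q) : W (1, x) = Coprod.lift κ (FreeGroup.lift x) w
  center_mul (t : unitInterval) (z : ι → Subgroup.center Q) (x : ι → Q) :
    W (t, fun i => z i * x i) = FreeGroup.lift z (Coprod.snd w) * W (t, x)

namespace IsContentHomotopy

theorem of_path {g : G} (γ : Path 1 (κ g)) :
    IsContentHomotopy (ι := ι) κ (Coprod.inl g) (γ.toContinuousMap.comp .fst) where
  zero_left x := by simp
  one_left x := by simp
  center_mul t z x := by simp

theorem of_variable (i : ι) :
    IsContentHomotopy κ (Coprod.inr (FreeGroup.of i)) ((ContinuousMap.eval i).comp .snd) where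
  zero_left x := by simp
  one_left x := by simp
  center_mul t z x := by simp

variable [IsTopologicalGroup Q]

theorem mul {v w : Coprod G (FreeGroup ι)} {V W : C(unitInterval × (ι → Q), Q)}
    (hV : IsContentHomotopy κ v V) (hW : IsContentHomotopy κ w W) :
    IsContentHomotopy κ (v * w) (V * W) where
  zero_left x := by simp [hV.zero_left, hW.zero_left]
  one_left x := by simp [hV.one_left, hW.one_left]
  center_mul t z x := by
    have comm := Subgroup.mem_center_iff.1 (FreeGroup.lift z (Coprod.snd w)).2 (V (t, x))
    simp only [ContinuousMap.mul_apply, hV.center_mul, hW.center_mul, map_mul, Subgroup.coe_mul,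
      mul_assoc]
    rw [← mul_assoc (V (t, x)), comm, mul_assoc]

theorem inv {w : Coprod G (FreeGroup ι)} {W : C(unitInterval × (ι → Q), Q)}
    (hW : IsContentHomotopy κ w W) : IsContentHomotopy κ w⁻¹ W⁻¹ where
  zero_left x := by simp [hW.zero_left]
  one_left x := by simp [hW.one_left]
  center_mul t z x := by
    have comm := Subgroup.mem_center_iff.1 (FreeGroup.lift z (Coprod.snd w))⁻¹.2 (W (t, x))⁻¹
    simpa [hW.center_mul] using comm

end IsContentHomotopy

theorem exists_isContentHomotopy [IsTopologicalGroup Q] [PathConnectedSpace Q] (κ : G →* Q)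
    (w : Coprod G (FreeGroup ι)) : ∃ W, IsContentHomotopy κ w W := by
  induction w using Coprod.induction_on with
  | inl g =>
    obtain ⟨γ⟩ := PathConnectedSpace.joined 1 (κ g)
    exact ⟨_, .of_path γ⟩
  | inr v =>
    induction v using FreeGroup.induction_on with
    | C1 =>
      have := IsContentHomotopy.of_path (ι := ι) ((Path.refl 1).cast rfl (map_one κ))
      exact ⟨_, by simpa only [map_one] using this⟩
    | of i => exact ⟨_, .of_variable i⟩
    | inv_of i hi =>
      obtain ⟨U, hU⟩ := hi
      exact ⟨_, by simpa only [map_inv] using hU.inv⟩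
    | mul u v hu hv =>
      obtain ⟨U, hU⟩ := hu
      obtain ⟨V, hV⟩ := hv
      exact ⟨_, by simpa only [map_mul] using hU.mul hV⟩
  | mul u v hu hv =>
    obtain ⟨U, hU⟩ := hu
    obtain ⟨V, hV⟩ := hv
    exact ⟨_, hU.mul hV⟩

theorem IsContentHomotopy.commutator_apply_neg [HasDistribNeg Q]
    {w : Coprod G (FreeGroup (Fin 2))}
    {W : C(unitInterval × (Fin 2 → Q), Q)} (hW : IsContentHomotopy κ w W)
    (hw : Coprod.snd w =
      FreeGroup.of 0 * FreeGroup.of 1 * (FreeGroup.of 0)⁻¹ * (FreeGroup.of 1)⁻¹)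
    (t : unitInterval) (a b : Q) :
    W (t, ![-a, b]) = W (t, ![a, b]) ∧ W (t, ![a, -b]) = W (t, ![a, b]) := by
  let neg : Subgroup.center Q := ⟨-1, neg_one_mem_center⟩
  have lift_eq_one (z : Fin 2 → Subgroup.center Q) : FreeGroup.lift z (Coprod.snd w) = 1 := by
    have comm : z 0 * z 1 = z 1 * z 0 := Subtype.ext (Subgroup.mem_center_iff.1 (z 1).2 (z 0))
    simp [hw, comm]
  have invariant (z : Fin 2 → Subgroup.center Q) (x : Fin 2 → Q) :
      W (t, fun i => z i * x i) = W (t, x) := by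
    rw [hW.center_mul, lift_eq_one, Subgroup.coe_one, one_mul]
  constructor
  · convert invariant ![neg, 1] ![a, b] using 3
    ext i
    fin_cases i <;> simp [neg]
  · convert invariant ![1, neg] ![a, b] using 3
    ext i
    fin_cases i <;> simp [neg]

end ContentHomotopy

/-! ### Unit quaternions -/

theorem zero_notMem_segment_of_norm_eq {E : Type*} [NormedAddCommGroup E] [NormedSpace ℝ E]
    {f g : E} (hnorm : ‖f‖ = ‖g‖) (hne : f ≠ -g) : (0 : E) ∉ segment ℝ f g := by
  rintro ⟨s, t, hs, ht, hst, hzero⟩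
  have hg : ‖g‖ ≠ 0 := fun hg => hne <| by
    rw [norm_eq_zero.1 hg, norm_eq_zero.1 (hnorm.trans hg), neg_zero]
  have hnorms : s * ‖g‖ = t * ‖g‖ := by
    simpa [norm_smul, abs_of_nonneg, hs, ht, hnorm] using
      congrArg norm (eq_neg_of_add_eq_zero_left hzero)
  obtain rfl := mul_right_cancel₀ hg hnorms
  have hs_ne : s ≠ 0 := by rintro rfl; simp at hst
  rw [← smul_add] at hzero
  exact hne (eq_neg_of_add_eq_zero_left ((smul_eq_zero.1 hzero).resolve_left hs_ne))

section BioddMaps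

variable {X Y E : Type*} [TopologicalSpace X] [TopologicalSpace Y] [TopologicalSpace E]

/-- Maps without zeros that are odd in each of two variables, that is, the sections without zeros
of a vector bundle over the product of two projective spaces. -/
structure IsBioddNonvanishing [Neg X] [Neg Y] [Neg E] [Zero E] (f : C(X × Y, E)) : Prop where
  neg_left (x : X) (y : Y) : f (-x, y) = -f (x, y)
  neg_right (x : X) (y : Y) : f (x, -y) = -f (x, y)
  ne_zero (p : X × Y) : f p ≠ 0

theorem IsBioddNonvanishing.homotopicWith_of_norm_eq [Neg X] [Neg Y] {E : Type*}
    [NormedAddCommGroup E] [NormedSpace ℝ E] {f g : C(X × Y, E)} (hf : IsBioddNonvanishing f)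
    (hg : IsBioddNonvanishing g) (hnorm : ∀ p, ‖f p‖ = ‖g p‖) (hne : ∀ p, f p ≠ -g p) :
    f.HomotopicWith g IsBioddNonvanishing :=
  ⟨{ ContinuousMap.Homotopy.affine f g with
      prop' t := {
        neg_left x y := by
          simp [AffineMap.lineMap_apply_module, hf.neg_left, hg.neg_left, add_comm]
        neg_right x y := by
          simp [AffineMap.lineMap_apply_module, hf.neg_right, hg.neg_right, add_comm]
        ne_zero p hp := zero_notMem_segment_of_norm_eq (hnorm p) (hne p) <| by
          rw [segment_eq_image_lineMap]
          exact ⟨t, t.2, hp⟩ } }⟩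

end BioddMaps

section UnitQuaternions

open Quaternion

/-- The group of unit quaternions. -/
abbrev UnitQuaternion := Metric.sphere (0 : ℍ[ℝ]) 1

instance : PathConnectedSpace UnitQuaternion :=
  isPathConnected_iff_pathConnectedSpace.1 <|
    isPathConnected_sphere (by simp [Quaternion.rank_eq_four]) 0 zero_le_one

/-- The inclusion of `S²` as the imaginary unit quaternions. -/
noncomputable def imaginaryOfSphere :
    C(Metric.sphere (0 : EuclideanSpace ℝ (Fin 3)) 1, UnitQuaternion) where
  toFun x := ⟨linearIsometryEquivTuple.symm !₂[0, x.1 0, x.1 1, x.1 2], by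
    have hx := norm_eq_of_mem_sphere x
    rw [EuclideanSpace.norm_eq, Fin.sum_univ_three] at hx
    rw [mem_sphere_zero_iff_norm, LinearIsometryEquiv.norm_map, EuclideanSpace.norm_eq]
    simpa [Fin.sum_univ_four] using hx⟩
  continuous_toFun := by
    refine Continuous.subtype_mk (linearIsometryEquivTuple.symm.continuous.comp <|
      (PiLp.continuous_toLp 2 _).comp <| continuous_pi fun m => ?_) _
    fin_cases m <;> simp only [Fin.zero_eta, Fin.mk_one, Fin.reduceFinMk, Matrix.cons_val] <;>
      fun_prop

/-- The inclusion of `S¹` as the unit quaternions spanned by `i` and `j`. -/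
noncomputable def imaginaryOfCircle : C(Circle, UnitQuaternion) where
  toFun z := ⟨linearIsometryEquivTuple.symm !₂[0, (z : ℂ).re, (z : ℂ).im, 0], by
    have hz := z.normSq_coe
    rw [Complex.normSq_apply] at hz
    rw [mem_sphere_zero_iff_norm, LinearIsometryEquiv.norm_map, EuclideanSpace.norm_eq]
    simp [Fin.sum_univ_four, sq, hz]⟩
  continuous_toFun := by
    refine Continuous.subtype_mk (linearIsometryEquivTuple.symm.continuous.comp <|
      (PiLp.continuous_toLp 2 _).comp <| continuous_pi fun m => ?_) _
    fin_cases m <;> simp only [Fin.zero_eta, Fin.mk_one, Fin.reduceFinMk, Matrix.cons_val] <;>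
      fun_prop

theorem imaginaryOfSphere_neg (x : Metric.sphere (0 : EuclideanSpace ℝ (Fin 3)) 1) :
    imaginaryOfSphere (-x) = -imaginaryOfSphere x := by
  ext
  exacts [neg_zero.symm, rfl, rfl, rfl]

theorem imaginaryOfCircle_neg (z : Circle) :
    imaginaryOfCircle (-z) = -imaginaryOfCircle z := by
  ext
  exacts [neg_zero.symm, rfl, rfl, neg_zero.symm]

/-- Multiplication of unit quaternions, as a map to `ℍ`. -/
noncomputable def quaternionMul : C(UnitQuaternion × UnitQuaternion, ℍ[ℝ]) where
  toFun p := (p.1 * p.2 : UnitQuaternion)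

/-- The map `(a, b) ↦ -ba` of unit quaternions, with values in `ℍ`. -/
noncomputable def negQuaternionMulSwap : C(UnitQuaternion × UnitQuaternion, ℍ[ℝ]) where
  toFun p := (-(p.2 * p.1) : UnitQuaternion)

theorem equivTuple_neg_mul_swap {p q : ℍ[ℝ]} (hp : p.re = 0) (hq : q.re = 0) :
    equivTuple ℝ (-(q * p)) = Function.update (equivTuple ℝ (p * q)) 0 (-(p * q).re) := by
  ext m
  fin_cases m <;> simp [hp, hq] <;> ring

theorem not_homotopicWith_quaternionMul_negQuaternionMulSwap :
    ¬ quaternionMul.HomotopicWith negQuaternionMulSwap IsBioddNonvanishing := by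
  rintro ⟨F⟩
  have hF (t : unitInterval) : IsBioddNonvanishing (F.curry t) := F.prop' t
  let H : C(unitInterval × Metric.sphere (0 : EuclideanSpace ℝ (Fin 3)) 1 × Circle, Fin 4 → ℝ) :=
    { toFun p := equivTuple ℝ (F (p.1, imaginaryOfSphere p.2.1, imaginaryOfCircle p.2.2))
      continuous_toFun := (PiLp.continuous_ofLp 2 _).comp <|
        linearIsometryEquivTuple.continuous.comp <| F.continuous.comp <| by fun_prop }
  have equivTuple_neg (q : ℍ[ℝ]) : equivTuple ℝ (-q) = -equivTuple ℝ q :=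
    map_neg (QuaternionAlgebra.linearEquivTuple (-1 : ℝ) 0 (-1)) q
  have neg_left (t x z) : H (t, -x, z) = -H (t, x, z) := by
    have odd := (hF t).neg_left (imaginaryOfSphere x) (imaginaryOfCircle z)
    rw [← imaginaryOfSphere_neg] at odd
    exact (congrArg _ odd).trans (equivTuple_neg _)
  have neg_right (t x z) : H (t, x, -z) = -H (t, x, z) := by
    have odd := (hF t).neg_right (imaginaryOfSphere x) (imaginaryOfCircle z)
    rw [← imaginaryOfCircle_neg] at odd
    exact (congrArg _ odd).trans (equivTuple_neg _)
  have reflect (p) : H (1, p) = Function.update (H (0, p)) 0 (-H (0, p) 0) := by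
    simp only [H, ContinuousMap.coe_mk, F.apply_zero, F.apply_one]
    exact equivTuple_neg_mul_swap rfl rfl
  obtain ⟨⟨t, x, z⟩, hzero⟩ := exists_eq_zero_of_odd_of_reflect H neg_left neg_right reflect
  exact (hF t).ne_zero (imaginaryOfSphere x, imaginaryOfCircle z) <|
    (map_eq_zero_iff (QuaternionAlgebra.linearEquivTuple (-1 : ℝ) 0 (-1))
      (LinearEquiv.injective _)).1 hzero

open Monoid (Coprod)

theorem exists_lift_eq_one_of_snd_eq_commutator {G : Type*} [Group G] (κ : G →* UnitQuaternion)
    {w : Coprod G (FreeGroup (Fin 2))} (hw : Coprod.snd w =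
      FreeGroup.of 0 * FreeGroup.of 1 * (FreeGroup.of 0)⁻¹ * (FreeGroup.of 1)⁻¹) :
    ∃ a b : UnitQuaternion, Coprod.lift κ (FreeGroup.lift ![a, b]) w = 1 := by
  by_contra! hne
  obtain ⟨W, hW⟩ := exists_isContentHomotopy κ w
  let F : C(unitInterval × UnitQuaternion × UnitQuaternion, ℍ[ℝ]) :=
    ⟨fun p => (W (p.1, ![p.2.1, p.2.2]) * (p.2.2 * p.2.1) : UnitQuaternion), by fun_prop⟩
  have hF (t : unitInterval) : IsBioddNonvanishing (F.curry t) := {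
    neg_left a b := by simp [F, hW.commutator_apply_neg hw]
    neg_right a b := by simp [F, hW.commutator_apply_neg hw]
    ne_zero p := ne_zero_of_mem_unit_sphere _ }
  have hneg : IsBioddNonvanishing negQuaternionMulSwap := {
    neg_left a b := by simp [negQuaternionMulSwap]
    neg_right a b := by simp [negQuaternionMulSwap]
    ne_zero p := ne_zero_of_mem_unit_sphere _ }
  have content_to_word : quaternionMul.HomotopicWith (F.curry 1) IsBioddNonvanishing :=
    ⟨⟨⟨F, fun p => by simp [F, hW.zero_left, hw, quaternionMul, mul_assoc],
      fun _ => rfl⟩, hF⟩⟩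
  have word_to_neg : (F.curry 1).HomotopicWith negQuaternionMulSwap IsBioddNonvanishing := by
    refine (hF 1).homotopicWith_of_norm_eq hneg (fun p => ?_) fun p hp => ?_
    · exact (norm_eq_of_mem_sphere _).trans (norm_eq_of_mem_sphere _).symm
    · have fixed : W (1, ![p.1, p.2]) * (p.2 * p.1) = p.2 * p.1 :=
        Subtype.ext (hp.trans (neg_neg _))
      exact hne p.1 p.2 ((hW.one_left _).symm.trans (mul_eq_right.1 fixed))
  exact not_homotopicWith_quaternionMul_negQuaternionMulSwap (content_to_word.trans word_to_neg)

/-- The matrix of right multiplication by a quaternion, on `ℍ` as a left complex vector space. -/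
noncomputable def quaternionMatrix (q : ℍ[ℝ]) : Matrix (Fin 2) (Fin 2) ℂ :=
  !![⟨q.re, q.imI⟩, ⟨q.imJ, q.imK⟩; ⟨-q.imJ, q.imK⟩, ⟨q.re, -q.imI⟩]

theorem quaternionMatrix_one : quaternionMatrix 1 = 1 := by
  ext i j
  fin_cases i <;> fin_cases j <;> apply Complex.ext <;> simp [quaternionMatrix]

theorem quaternionMatrix_mul (p q : ℍ[ℝ]) :
    quaternionMatrix (p * q) = quaternionMatrix p * quaternionMatrix q := by
  ext i j
  fin_cases i <;> fin_cases j <;> apply Complex.ext <;>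
    simp [quaternionMatrix, Matrix.mul_apply, Fin.sum_univ_two] <;> ring

theorem star_quaternionMatrix (q : ℍ[ℝ]) :
    star (quaternionMatrix q) = quaternionMatrix (star q) := by
  ext i j
  fin_cases i <;> fin_cases j <;> apply Complex.ext <;> simp [quaternionMatrix]

theorem det_quaternionMatrix (q : ℍ[ℝ]) : (quaternionMatrix q).det = (normSq q : ℝ) := by
  rw [quaternionMatrix, Matrix.det_fin_two_of]
  apply Complex.ext <;> simp [normSq_def', sq] <;> ring

theorem quaternionMatrix_injective : Function.Injective quaternionMatrix := by
  intro p q h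
  have h₀ := congrFun (congrFun h 0) 0
  have h₁ := congrFun (congrFun h 0) 1
  simp only [quaternionMatrix, Matrix.of_apply, Matrix.cons_val, Complex.mk.injEq] at h₀ h₁
  ext
  exacts [h₀.1, h₀.2, h₁.1, h₁.2]

theorem exists_quaternionMatrix_eq {A : Matrix (Fin 2) (Fin 2) ℂ} (hA : star A = A.adjugate) :
    ∃ q, quaternionMatrix q = A := by
  rw [Matrix.adjugate_fin_two] at hA
  have h₀ : star (A 0 0) = A 1 1 := congrFun (congrFun hA 0) 0
  have h₁ : -star (A 0 1) = A 1 0 := neg_eq_iff_eq_neg.2 (congrFun (congrFun hA 1) 0)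
  refine ⟨⟨(A 0 0).re, (A 0 0).im, (A 0 1).re, (A 0 1).im⟩, ?_⟩
  ext i j
  fin_cases i <;> fin_cases j <;>
    simp [quaternionMatrix, ← h₀, ← h₁, Complex.ext_iff]

theorem mem_unitQuaternion_iff_normSq {q : ℍ[ℝ]} :
    q ∈ Metric.sphere (0 : ℍ[ℝ]) 1 ↔ normSq q = 1 := by
  rw [mem_sphere_zero_iff_norm, normSq_eq_norm_mul_self, ← sq,
    pow_eq_one_iff_of_nonneg (norm_nonneg q) two_ne_zero]

/-- The action of the unit quaternions on `ℍ` by right multiplication, as a map to `SU(2)`. -/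
noncomputable def unitQuaternionToSU : UnitQuaternion →* SU 2 where
  toFun q := ⟨⟨quaternionMatrix q, by
      rw [Matrix.mem_unitaryGroup_iff, star_quaternionMatrix, ← quaternionMatrix_mul,
        self_mul_star, mem_unitQuaternion_iff_normSq.1 q.2, coe_one, quaternionMatrix_one]⟩,
    (det_quaternionMatrix q).trans (by simp [mem_unitQuaternion_iff_normSq.1 q.2])⟩
  map_one' := Subtype.ext (Subtype.ext quaternionMatrix_one)
  map_mul' p q := Subtype.ext (Subtype.ext (quaternionMatrix_mul p q))

theorem unitQuaternionToSU_bijective : Function.Bijective unitQuaternionToSU := by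
  refine ⟨fun p q h => Subtype.ext (quaternionMatrix_injective ?_), ?_⟩
  · exact congrArg (fun A : SU 2 => (A : Matrix (Fin 2) (Fin 2) ℂ)) h
  rintro ⟨⟨A, hA⟩, hdet : A.det = 1⟩
  have star_eq : star A = A.adjugate := by
    rw [← Matrix.inv_eq_left_inv (Matrix.mem_unitaryGroup_iff'.1 hA), Matrix.inv_def, hdet,
      Ring.inverse_one, one_smul]
  obtain ⟨q, rfl⟩ := exists_quaternionMatrix_eq star_eq
  have hq : normSq q = 1 := by exact_mod_cast (det_quaternionMatrix q).symm.trans hdet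
  exact ⟨⟨q, mem_unitQuaternion_iff_normSq.2 hq⟩, rfl⟩

end UnitQuaternions

/-- If `w ∈ SU(2) ∗ F₂` has content the commutator `[x₁,x₂]` of the two generators of
`F₂`, then the equation `w(a,b) = 1` can be solved in `SU(2)`. -/
theorem equation_solvable_in_SU2_of_content_eq_commutator
    (w : Monoid.Coprod (SU 2) (FreeGroup (Fin 2)))
    (hw : Monoid.Coprod.lift (1 : SU 2 →* FreeGroup (Fin 2))
        (MonoidHom.id (FreeGroup (Fin 2))) w
      = FreeGroup.of 0 * FreeGroup.of 1 * (FreeGroup.of 0)⁻¹ * (FreeGroup.of 1)⁻¹) :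
    ∃ a b : SU 2,
      Monoid.Coprod.lift (MonoidHom.id (SU 2)) (FreeGroup.lift ![a, b]) w = 1 := by
  let e : UnitQuaternion ≃* SU 2 := .ofBijective unitQuaternionToSU unitQuaternionToSU_bijective
  obtain ⟨a, b, hab⟩ := exists_lift_eq_one_of_snd_eq_commutator e.symm.toMonoidHom hw
  have transport : e.toMonoidHom.comp
      (Monoid.Coprod.lift e.symm.toMonoidHom (FreeGroup.lift ![a, b])) =
        Monoid.Coprod.lift (MonoidHom.id (SU 2)) (FreeGroup.lift ![e a, e b]) := by
    ext i
    · simp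
    · fin_cases i <;> simp
  refine ⟨e a, e b, ?_⟩
  rw [← transport, MonoidHom.comp_apply, hab, map_one]
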